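/- Let p be a prime with p ≡ 1 or 11 (mod 12). If p ≡ 1 (mod 12), then there are integers x, y with p = x^2 + 9y^2, and for any such x, Σ_{k=0}^{p-1} C(2k,k) · a_k · (-12)^{-k} ≡ 4x^2 (mod p). If p ≡ 11 (mod 12), then Σ_{k=0}^{p-1} C(2k,k) · a_k · (-12)^{-k} ≡ 0 (mod p). -/

import Mathlib

open Finset

/-- `a n = ∑_{k=0}^{n} C(n,k)^2·C(2k,k)`. -/
def a (n : ℕ) : ℕ :=
  ∑ k ∈ Finset.range (n + 1), Nat.choose n k ^ 2 * Nat.choose (2 * k) k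

/-- Zeilberger telescoping for the numbers `a n`. -/
lemma a_telescope (n j : ℕ) :
    ∑ k ∈ range (j + 1), (((n : ℚ) + 2) ^ 2 * (((n + 2).choose k : ℚ) ^ 2 * (2 * k).choose k)
      - (10 * n ^ 2 + 30 * n + 23) * ((n + 1).choose k ^ 2 * (2 * k).choose k)
      + 9 * (n + 1) ^ 2 * (n.choose k ^ 2 * (2 * k).choose k))
    = -(4 * (n : ℚ) + 5 - 3 * j) * (j + 1) * (n + 1).choose j ^ 2 * (2 * (j + 1)).choose (j + 1) := by
  induction j with
  | zero => simp; ring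
  | succ j ih =>
    rw [sum_range_succ, ih]
    have h1 : ((n + 2).choose (j + 1) : ℚ) = (n + 1).choose j + (n + 1).choose (j + 1) := by
      exact_mod_cast Nat.choose_succ_succ (n + 1) j
    have h2 : ((n + 1).choose (j + 1) : ℚ) = (n + 1 - j) * (n + 1).choose j / (j + 1) := by
      rw [eq_div_iff (by positivity)]
      rcases le_or_gt j (n + 1) with h | h
      · have := Nat.choose_succ_right_eq (n + 1) j
        have h' : (((n + 1 - j : ℕ)) : ℚ) = n + 1 - j := by rw [Nat.cast_sub h]; push_cast; ring
        rw [← h', mul_comm (((n + 1 - j : ℕ)) : ℚ)]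
        exact_mod_cast this
      · rw [Nat.choose_eq_zero_of_lt h, Nat.choose_eq_zero_of_lt (by omega)]; simp
    have h3 : (n.choose (j + 1) : ℚ) = (n - j) * (n + 1).choose (j + 1) / (n + 1) := by
      rw [eq_div_iff (by positivity)]
      rcases le_or_gt (j + 1) (n + 1) with h | h
      · have := Nat.choose_mul_succ_eq n (j + 1)
        have h' : (((n + 1 - (j + 1) : ℕ)) : ℚ) = n - j := by rw [Nat.cast_sub h]; push_cast; ring
        rw [← h', mul_comm (((n + 1 - (j + 1) : ℕ)) : ℚ)]
        exact_mod_cast this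
      · rw [Nat.choose_eq_zero_of_lt h, Nat.choose_eq_zero_of_lt (by omega)]; simp
    have h4 : ((2 * (j + 1 + 1)).choose (j + 1 + 1) : ℚ)
        = 2 * (2 * j + 3) * (2 * (j + 1)).choose (j + 1) / (j + 2) := by
      rw [eq_div_iff (by positivity)]
      have := Nat.succ_mul_centralBinom_succ (j + 1)
      simp only [Nat.centralBinom] at this
      have h5 : ((j + 1 + 1 : ℕ) : ℚ) * ((2 * (j + 1 + 1)).choose (j + 1 + 1) : ℕ)
        = 2 * (2 * (j + 1) + 1) * ((2 * (j + 1)).choose (j + 1) : ℕ) := by exact_mod_cast this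
      push_cast at h5
      linear_combination h5
    rw [h4, h1, h3, h2]
    push_cast
    field_simp
    ring

lemma a_rec (n : ℕ) : ((n : ℤ) + 2) ^ 2 * a (n + 2)
    = (10 * n ^ 2 + 30 * n + 23) * a (n + 1) - 9 * (n + 1) ^ 2 * a n := by
  have h := a_telescope n (n + 2)
  rw [Nat.choose_eq_zero_of_lt (show n + 1 < n + 2 by omega)] at h
  have e2 : (a (n + 2) : ℚ) = ∑ k ∈ range (n + 3), ((n + 2).choose k ^ 2 * (2 * k).choose k : ℚ) := by
    simp [a]
  have e1 : (a (n + 1) : ℚ) = ∑ k ∈ range (n + 3), ((n + 1).choose k ^ 2 * (2 * k).choose k : ℚ) := by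
    rw [sum_range_succ, Nat.choose_eq_zero_of_lt (show n + 1 < n + 2 by omega)]; simp [a]
  have e0 : (a n : ℚ) = ∑ k ∈ range (n + 3), (n.choose k ^ 2 * (2 * k).choose k : ℚ) := by
    rw [sum_range_succ, sum_range_succ, Nat.choose_eq_zero_of_lt (show n < n + 2 by omega),
      Nat.choose_eq_zero_of_lt (show n < n + 1 by omega)]; simp [a]
  have : ((n : ℚ) + 2) ^ 2 * a (n + 2)
    = (10 * n ^ 2 + 30 * n + 23) * a (n + 1) - 9 * (n + 1) ^ 2 * a n := by
    rw [e2, e1, e0, mul_sum, mul_sum, mul_sum, ← sub_eq_zero, ← sum_sub_distrib, ← sum_sub_distrib]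
    rw [← sub_eq_zero] at h
    simp only [ne_eq, OfNat.ofNat_ne_zero, not_false_eq_true, zero_pow, Nat.cast_zero, mul_zero, zero_mul, sub_zero] at h
    rw [← h]
    apply sum_congr rfl
    intros; ring
  exact_mod_cast this

/-- The coefficients `C(2n,n) a_n`. -/
def uu (n : ℕ) : ℤ := (2 * n).choose n * a n

lemma uu_rec (n : ℕ) : ((n : ℤ) + 2) ^ 3 * uu (n + 2)
    = 2 * (2 * n + 3) * (10 * n ^ 2 + 30 * n + 23) * uu (n + 1)
      - 36 * (n + 1) * (2 * n + 1) * (2 * n + 3) * uu n := by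
  have h := a_rec n
  have c1 := Nat.succ_mul_centralBinom_succ n
  have c2 := Nat.succ_mul_centralBinom_succ (n + 1)
  simp only [Nat.centralBinom] at c1 c2
  have d1 : ((n : ℤ) + 1) * (2 * (n + 1)).choose (n + 1) = 2 * (2 * n + 1) * (2 * n).choose n := by
    exact_mod_cast c1
  have d2 : ((n : ℤ) + 1 + 1) * (2 * (n + 1 + 1)).choose (n + 1 + 1)
      = 2 * (2 * (n + 1) + 1) * (2 * (n + 1)).choose (n + 1) := by
    exact_mod_cast c2
  unfold uu
  change _ * (((2 * (n + 1 + 1)).choose (n + 1 + 1) : ℤ) * a (n + 2)) = _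
  linear_combination (n + 2 : ℤ) ^ 2 * a (n + 2) * d2
    + 2 * (2 * n + 3) * (2 * (n + 1)).choose (n + 1) * h - 18 * (n + 1) * (2 * n + 3) * a n * d1

lemma uu_zero : uu 0 = 1 := by simp [uu, a]
lemma uu_one : uu 1 = 6 := by simp [uu, a, sum_range_succ]


lemma idH {R : Type*} [CommRing R] (x Ai m j D M dM : R) (hA : (3 - 6 * x - x ^ 2) * Ai = 1)
    (hm : 2 * m + 1 = 0) (hD : D = x * (3 - x) * (1 - 3 * x))
    (hM : M = (m - 2 * j) * (D * (-6 - 2 * x) * Ai) + 3 * j * ((3 - x) * (1 - 3 * x)))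
    (hdM : dM = (m - 2 * j) * ((3 - 20 * x + 9 * x ^ 2) * D * (-6 - 2 * x) * Ai + D * (-2 * D) * Ai
      - D * (-6 - 2 * x) * (D * (-6 - 2 * x) * Ai ^ 2)) + 3 * j * (-10 + 6 * x) * D) :
    dM + M ^ 2 - 3 * (1 - x) * D
      = (3 - x) ^ 3 * (1 - 3 * x) * (3 * j ^ 2 - 4 * (4 * j + 1) * (4 * j + 3) * (x ^ 3 * Ai ^ 2)) := by
  subst hD hM hdM
  grind

lemma idW {R : Type*} [CommRing R] (x V Vi n D M dM ddM : R) (hV : V = 1 - x ^ 2)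
    (hVi : V * Vi = 1)
    (hD : D = x * (3 - x) * (1 - 3 * x))
    (hM : M = n * ((3 - 20 * x + 9 * x ^ 2) + 4 * x * D * Vi) + 2 * x * D * Vi)
    (hdM : dM = D * (n * (-20 + 18 * x) + (4 * n + 2) * ((D + x * (3 - 20 * x + 9 * x ^ 2)) * Vi
      + x * D * (2 * x * Vi ^ 2))))
    (hddM : ddM = D * ((3 - 20 * x + 9 * x ^ 2) * (n * (-20 + 18 * x)
      + (4 * n + 2) * ((D + x * (3 - 20 * x + 9 * x ^ 2)) * Vi
      + x * D * (2 * x * Vi ^ 2))) + D * (n * 18 + (4 * n + 2) *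
        ((2 * (3 - 20 * x + 9 * x ^ 2) + x * (-20 + 18 * x)) * Vi
         + (D + x * (3 - 20 * x + 9 * x ^ 2)) * (2 * x * Vi ^ 2)
         + (4 * x * D + 2 * x ^ 2 * (3 - 20 * x + 9 * x ^ 2)) * Vi ^ 2
         + 2 * x ^ 2 * D * (4 * x * Vi ^ 3))))) :
    ddM + 3 * M * dM + M ^ 3 - 12 * (1 - x) * D * M
       - 6 * (D * (-D + (1 - x) * (3 - 20 * x + 9 * x ^ 2)))
      = (x ^ 2 - 6 * x + 1) * (3 * x ^ 2 - 2 * x + 3) * V * (9 * n ^ 3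
         - 2 * (2 * n + 1) * (10 * n ^ 2 + 10 * n + 3) * (D * Vi ^ 2)
         + 4 * (n + 1) * (2 * n + 1) * (2 * n + 3) * (D * Vi ^ 2) * (D * Vi ^ 2)) := by
  subst hD hM hdM hddM hV
  grind

section Diff

variable {F R : Type*} [CommRing F] [CommRing R] [Algebra F R] (δ : Derivation F R R)

lemma der_pow_eig {u α : R} (h : δ u = α * u) (n : ℕ) : δ (u ^ n) = n * α * u ^ n := by
  induction n with
  | zero => simp
  | succ n ih =>
    rw [pow_succ, Derivation.leibniz, ih, h]
    simp only [smul_eq_mul]; push_cast; ring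

lemma der_term {E w e ω : R} (hE : δ E = e * E) (hw : δ w = ω * w) (n : ℕ) :
    δ (E * w ^ n) = (e + n * ω) * (E * w ^ n) := by
  rw [Derivation.leibniz, der_pow_eig δ hw, hE]
  simp only [smul_eq_mul]; ring

lemma der_two {T M dM : R} (hT : δ T = M * T) (hM : δ M = dM) :
    δ (δ T) = (dM + M ^ 2) * T := by
  rw [hT, Derivation.leibniz, hT, hM]
  simp only [smul_eq_mul]; ring

lemma der_three {T M dM ddM : R} (hT : δ T = M * T) (hM : δ M = dM) (hdM : δ dM = ddM) :
    δ (δ (δ T)) = (ddM + 3 * M * dM + M ^ 3) * T := by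
  rw [der_two δ hT hM, Derivation.leibniz, hT, map_add, hdM, Derivation.leibniz_pow, hM]
  simp only [smul_eq_mul, nsmul_eq_mul]; push_cast; ring

lemma der_const (n : ℕ) [n.AtLeastTwo] : δ (ofNat(n) : R) = 0 := by
  rw [← Nat.cast_ofNat (R := R)]
  exact δ.map_natCast _

lemma der_inv {V Vi dV : R} (hV : V * Vi = 1) (h : δ V = dV) : δ Vi = - dV * Vi ^ 2 := by
  have h1 : δ (V * Vi) = 0 := by rw [hV]; simp
  rw [Derivation.leibniz, h] at h1
  simp only [smul_eq_mul] at h1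
  linear_combination Vi * h1 - δ Vi * hV

lemma H_ode_abs {x Ai D : R} (hx : δ x = D) (hA : (3 - 6 * x - x ^ 2) * Ai = 1)
    (hD : D = x * (3 - x) * (1 - 3 * x)) (m : ℕ) (hm : 2 * (m : R) + 1 = 0)
    (c : ℕ → R) (hc : ∀ j, δ (c j) = 0)
    (hrec : ∀ j : ℕ, 3 * ((j : R) + 1) ^ 2 * c (j + 1) = 4 * (4 * j + 1) * (4 * j + 3) * c j)
    (N : ℕ) (hN : c N = 0) (h : R)
    (hh : h = ∑ j ∈ range N, c j * ((3 - 6 * x - x ^ 2) ^ m * (x ^ 3 * Ai ^ 2) ^ j)) :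
    δ (δ h) = 3 * (1 - x) * D * h := by
  set A := 3 - 6 * x - x ^ 2 with hAdef
  have dA : δ A = D * (-6 - 2 * x) := by
    rw [hAdef]
    simp only [map_sub, Derivation.leibniz, Derivation.leibniz_pow, der_const, hx, smul_eq_mul,
      nsmul_eq_mul]
    push_cast; ring
  have dAi : δ Ai = - (D * (-6 - 2 * x)) * Ai ^ 2 := der_inv δ hA dA
  have dD : δ D = (3 - 20 * x + 9 * x ^ 2) * D := by
    rw [hD]
    simp only [map_sub, Derivation.leibniz, der_const, hx, smul_eq_mul, Derivation.map_one_eq_zero]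
    rw [hD]; ring
  have dE : δ (A ^ m) = (m * (D * (-6 - 2 * x) * Ai)) * A ^ m := by
    apply (der_pow_eig δ (α := D * (-6 - 2 * x) * Ai) _ m).trans
    · ring
    · rw [dA]; linear_combination - (D * (-6 - 2 * x)) * hA
  have dw : δ (x ^ 3 * Ai ^ 2) = (3 * ((3 - x) * (1 - 3 * x)) - 2 * (D * (-6 - 2 * x) * Ai))
      * (x ^ 3 * Ai ^ 2) := by
    simp only [Derivation.leibniz, Derivation.leibniz_pow, hx, dAi, smul_eq_mul, nsmul_eq_mul]
    rw [hD]; push_cast; ring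
  have key : ∀ j : ℕ, δ (δ (A ^ m * (x ^ 3 * Ai ^ 2) ^ j))
      = (3 * (1 - x) * D + (3 - x) ^ 3 * (1 - 3 * x) *
        (3 * (j : R) ^ 2 - 4 * (4 * j + 1) * (4 * j + 3) * (x ^ 3 * Ai ^ 2)))
        * (A ^ m * (x ^ 3 * Ai ^ 2) ^ j) := by
    intro j
    have h1 := der_term δ dE dw j
    rw [der_two δ h1 rfl]
    congr 1
    have h2 := idH x Ai m j D (m * (D * (-6 - 2 * x) * Ai) +
      j * (3 * ((3 - x) * (1 - 3 * x)) - 2 * (D * (-6 - 2 * x) * Ai))) _ hA hm hD (by ring) rfl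
    rw [← h2]
    simp only [map_add, map_sub, map_neg, Derivation.leibniz, hx, dAi, dD, smul_eq_mul, der_const,
      Derivation.map_natCast, Derivation.map_one_eq_zero]
    rw [hD]
    ring
  have key2 : ∀ K : ℕ, ∑ j ∈ range K, c j * ((3 * (j : R) ^ 2
      - 4 * (4 * j + 1) * (4 * j + 3) * (x ^ 3 * Ai ^ 2)) * (A ^ m * (x ^ 3 * Ai ^ 2) ^ j))
      = - (3 * (K : R) ^ 2 * c K * (A ^ m * (x ^ 3 * Ai ^ 2) ^ K)) := by
    intro K
    induction K with
    | zero => simp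
    | succ K ih =>
      rw [sum_range_succ, ih]
      push_cast
      linear_combination (A ^ m * (x ^ 3 * Ai ^ 2) ^ (K + 1)) * hrec K
  have e1 : δ (δ h) - 3 * (1 - x) * D * h = (3 - x) ^ 3 * (1 - 3 * x) *
      ∑ j ∈ range N, c j * ((3 * (j : R) ^ 2
      - 4 * (4 * j + 1) * (4 * j + 3) * (x ^ 3 * Ai ^ 2)) * (A ^ m * (x ^ 3 * Ai ^ 2) ^ j)) := by
    rw [hh, map_sum, map_sum, mul_sum, mul_sum, ← sum_sub_distrib]
    apply sum_congr rfl
    intro j _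
    have : δ (δ (c j * (A ^ m * (x ^ 3 * Ai ^ 2) ^ j)))
        = c j * δ (δ (A ^ m * (x ^ 3 * Ai ^ 2) ^ j)) := by
      have hcm : ∀ y : R, δ (c j * y) = c j * δ y := by
        intro y
        rw [Derivation.leibniz, hc]
        simp only [mul_zero, add_zero, smul_eq_mul]
      rw [hcm, hcm]
    rw [this, key]; ring
  rw [key2, hN] at e1
  linear_combination e1

/-- The third order operator annihilating squares of solutions. -/
def LL (x D Z : R) : R := δ (δ (δ Z)) - 12 * (1 - x) * D * δ Z
  - 6 * (D * (-D + (1 - x) * (3 - 20 * x + 9 * x ^ 2))) * Z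

lemma LL_sub (x D Z Z' : R) : LL δ x D (Z - Z') = LL δ x D Z - LL δ x D Z' := by
  simp only [LL, map_sub]; ring

lemma LL_sq {x D h : R} (hx : δ x = D) (hD : D = x * (3 - x) * (1 - 3 * x))
    (hh : δ (δ h) = 3 * (1 - x) * D * h) : LL δ x D (h ^ 2) = 0 := by
  have dD : δ D = (3 - 20 * x + 9 * x ^ 2) * D := by
    rw [hD]
    simp only [map_sub, Derivation.leibniz, der_const, hx, smul_eq_mul, Derivation.map_one_eq_zero]
    rw [hD]; ring
  unfold LL
  simp only [sq, Derivation.leibniz, map_add, hh, smul_eq_mul, map_sub, hx, dD, der_const,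
    Derivation.map_one_eq_zero]
  ring

lemma W_ode_abs {x V Vi D E : R} (hx : δ x = D) (hV : V = 1 - x ^ 2) (hVi : V * Vi = 1)
    (hD : D = x * (3 - x) * (1 - 3 * x)) (hE : δ E = 0)
    (c : ℕ → R) (hc : ∀ j, δ (c j) = 0) (h01 : 9 * c 1 = 6 * c 0)
    (hrec : ∀ n : ℕ, 9 * ((n : R) + 2) ^ 3 * c (n + 2)
      = 2 * (2 * n + 3) * (10 * n ^ 2 + 30 * n + 23) * c (n + 1)
        - 4 * (n + 1) * (2 * n + 1) * (2 * n + 3) * c n)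
    (N : ℕ) (hN : c N = 0) (hN' : c (N + 1) = 0) (W : R)
    (hW : W = ∑ n ∈ range (N + 1), c n * (E * Vi * (D * Vi ^ 2) ^ n)) :
    LL δ x D W = 0 := by
  have dV : δ V = - (2 * x * D) := by
    rw [hV]
    simp only [map_sub, Derivation.leibniz_pow, hx, smul_eq_mul, Derivation.map_one_eq_zero,
      nsmul_eq_mul]
    push_cast; ring
  have dVi : δ Vi = 2 * x * D * Vi ^ 2 := by rw [der_inv δ hVi dV]; ring
  have dD : δ D = (3 - 20 * x + 9 * x ^ 2) * D := by
    rw [hD]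
    simp only [map_sub, Derivation.leibniz, der_const, hx, smul_eq_mul, Derivation.map_one_eq_zero]
    rw [hD]; ring
  have dE : δ (E * Vi) = (2 * x * D * Vi) * (E * Vi) := by
    rw [Derivation.leibniz, hE, dVi]; simp only [smul_eq_mul]; ring
  have dw : δ (D * Vi ^ 2) = ((3 - 20 * x + 9 * x ^ 2) + 4 * x * D * Vi) * (D * Vi ^ 2) := by
    simp only [Derivation.leibniz, Derivation.leibniz_pow, dD, dVi, smul_eq_mul, nsmul_eq_mul]
    push_cast; ring
  have key : ∀ n : ℕ, LL δ x D (E * Vi * (D * Vi ^ 2) ^ n)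
      = (x ^ 2 - 6 * x + 1) * (3 * x ^ 2 - 2 * x + 3) * V * (9 * (n : R) ^ 3
         - 2 * (2 * n + 1) * (10 * n ^ 2 + 10 * n + 3) * (D * Vi ^ 2)
         + 4 * (n + 1) * (2 * n + 1) * (2 * n + 3) * (D * Vi ^ 2) * (D * Vi ^ 2))
        * (E * Vi * (D * Vi ^ 2) ^ n) := by
    intro n
    have h1 := der_term δ dE dw n
    have h2 : δ (2 * x * D * Vi + n * ((3 - 20 * x + 9 * x ^ 2) + 4 * x * D * Vi))
        = D * (n * (-20 + 18 * x) + (4 * n + 2) * ((D + x * (3 - 20 * x + 9 * x ^ 2)) * Vi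
      + x * D * (2 * x * Vi ^ 2))) := by
      simp only [map_add, map_sub, Derivation.leibniz, Derivation.leibniz_pow, hx, dVi, dD,
        smul_eq_mul, nsmul_eq_mul, der_const, Derivation.map_natCast]
      push_cast; ring
    unfold LL
    rw [der_three δ h1 h2 rfl, h1,
      ← idW x V Vi n D (2 * x * D * Vi + n * ((3 - 20 * x + 9 * x ^ 2) + 4 * x * D * Vi)) _ _
      hV hVi hD (by ring) rfl rfl]
    simp only [map_add, map_sub, map_neg, Derivation.leibniz, Derivation.leibniz_pow, hx, dVi, dD,
        smul_eq_mul, nsmul_eq_mul, der_const, Derivation.map_natCast]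
    push_cast
    ring
  have key2 : ∀ K : ℕ, ∑ n ∈ range (K + 1), c n * ((9 * (n : R) ^ 3
         - 2 * (2 * n + 1) * (10 * n ^ 2 + 10 * n + 3) * (D * Vi ^ 2)
         + 4 * (n + 1) * (2 * n + 1) * (2 * n + 3) * (D * Vi ^ 2) * (D * Vi ^ 2))
        * (E * Vi * (D * Vi ^ 2) ^ n))
      = - (9 * ((K : R) + 1) ^ 3 * c (K + 1) * (E * Vi * (D * Vi ^ 2) ^ (K + 1)))
        + 4 * (K + 1) * (2 * K + 1) * (2 * K + 3) * c K * (E * Vi * (D * Vi ^ 2) ^ (K + 2)) := by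
    intro K
    induction K with
    | zero =>
      rw [sum_range_one]
      push_cast
      linear_combination (E * Vi * (D * Vi ^ 2)) * h01
    | succ K ih =>
      rw [sum_range_succ, ih]
      push_cast
      linear_combination (E * Vi * (D * Vi ^ 2) ^ (K + 2)) * hrec K
  have e1 : LL δ x D W = (x ^ 2 - 6 * x + 1) * (3 * x ^ 2 - 2 * x + 3) * V *
      ∑ n ∈ range (N + 1), c n * ((9 * (n : R) ^ 3
         - 2 * (2 * n + 1) * (10 * n ^ 2 + 10 * n + 3) * (D * Vi ^ 2)
         + 4 * (n + 1) * (2 * n + 1) * (2 * n + 3) * (D * Vi ^ 2) * (D * Vi ^ 2))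
        * (E * Vi * (D * Vi ^ 2) ^ n)) := by
    rw [hW, LL, map_sum, map_sum, map_sum, mul_sum, mul_sum, mul_sum, ← sum_sub_distrib,
      ← sum_sub_distrib]
    apply sum_congr rfl
    intro n _
    have hcm : ∀ y : R, δ (c n * y) = c n * δ y := by
      intro y
      rw [Derivation.leibniz, hc]
      simp only [mul_zero, add_zero, smul_eq_mul]
    have := key n
    unfold LL at this
    simp only [hcm]
    linear_combination c n * this
  rw [key2, hN, hN'] at e1
  rw [e1]; ring

end Diff


section PS

open Polynomial

variable {p : ℕ} [Fact p.Prime]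

lemma chF (n k : ℕ) :
    ((n.choose (k + 1) : ℕ) : ZMod p) * (k + 1) = (n.choose k : ℕ) * ((n : ZMod p) - k) := by
  rcases le_or_gt k n with h | h
  · rw [← Nat.cast_sub h]
    exact_mod_cast congrArg (Nat.cast (R := ZMod p)) (Nat.choose_succ_right_eq n k)
  · rw [Nat.choose_eq_zero_of_lt h, Nat.choose_eq_zero_of_lt (by omega)]; simp

lemma cbF (j : ℕ) : ((j : ZMod p) + 1) * (((2 * (j + 1)).choose (j + 1) : ℕ) : ZMod p)
    = 2 * (2 * j + 1) * ((2 * j).choose j : ℕ) := by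
  have := Nat.succ_mul_centralBinom_succ j
  simp only [Nat.centralBinom] at this
  exact_mod_cast congrArg (Nat.cast (R := ZMod p)) this

lemma natCast_ne {n : ℕ} (h0 : 0 < n) (h : n < p) : (n : ZMod p) ≠ 0 := by
  intro h1
  rw [ZMod.natCast_eq_zero_iff] at h1
  exact absurd (Nat.le_of_dvd h0 h1) (by omega)

/-- coefficients of the Hasse polynomial -/
noncomputable def cH (p m : ℕ) [Fact p.Prime] (j : ℕ) : ZMod p :=
  (m.choose (2 * j) : ℕ) * ((2 * j).choose j : ℕ) * (16 / 3) ^ j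

lemma cH_rec {m : ℕ} (hm : p = 2 * m + 1) (h3 : (3 : ZMod p) ≠ 0) (j : ℕ) :
    3 * ((j : ZMod p) + 1) ^ 2 * cH p m (j + 1) = 4 * (4 * j + 1) * (4 * j + 3) * cH p m j := by
  have hm' : 2 * (m : ZMod p) + 1 = 0 := by
    have : ((2 * m + 1 : ℕ) : ZMod p) = 0 := by rw [← hm]; simp
    exact_mod_cast this
  have h1 := chF (p := p) m (2 * j)
  have h2 := chF (p := p) m (2 * j + 1)
  have h4 := cbF (p := p) j
  unfold cH
  rw [pow_succ]
  have hq : (3 : ZMod p) * (16 / 3) = 16 := by field_simp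
  generalize (16 / 3 : ZMod p) = q at *
  have e : (2 * (j + 1)) = 2 * j + 1 + 1 := by ring
  rw [e] at h4 ⊢
  push_cast at h1 h2 h4 ⊢
  generalize ((m.choose (2 * j + 1 + 1) : ℕ) : ZMod p) = c2 at *
  generalize ((m.choose (2 * j + 1) : ℕ) : ZMod p) = c1 at *
  generalize ((m.choose (2 * j) : ℕ) : ZMod p) = c0 at *
  generalize (((2 * j + 1 + 1).choose (j + 1) : ℕ) : ZMod p) = d1 at *
  generalize (((2 * j).choose j : ℕ) : ZMod p) = d0 at *
  linear_combination ((j : ZMod p) + 1) ^ 2 * c2 * d1 * q ^ j * hq + 16 * (((j : ZMod p) + 1) * c2) * q ^ j * h4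
    + 16 * (2 * j + 1) * d0 * q ^ j * h2 + 16 * d0 * q ^ j * ((m : ZMod p) - (2 * j + 1)) * h1
    + 4 * c0 * d0 * q ^ j * (2 * m - 8 * j - 3) * hm'

/-- The Hasse polynomial. -/
noncomputable def Hp (p m : ℕ) [Fact p.Prime] : (ZMod p)[X] :=
  ∑ j ∈ range (m + 1), C (cH p m j) * ((3 - 6 * X - X ^ 2) ^ (m - 2 * j) * (X ^ 3) ^ j)

noncomputable def cW (p : ℕ) [Fact p.Prime] (n : ℕ) : ZMod p := (uu n : ZMod p) * (9⁻¹) ^ n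

lemma cW_rec (h3 : (9 : ZMod p) ≠ 0) (n : ℕ) : 9 * ((n : ZMod p) + 2) ^ 3 * cW p (n + 2)
      = 2 * (2 * n + 3) * (10 * n ^ 2 + 30 * n + 23) * cW p (n + 1)
        - 4 * (n + 1) * (2 * n + 1) * (2 * n + 3) * cW p n := by
  have h := congrArg (Int.cast (R := ZMod p)) (uu_rec n)
  push_cast at h
  unfold cW
  rw [pow_succ, pow_succ]
  have hq : (9 : ZMod p) * 9⁻¹ = 1 := mul_inv_cancel₀ h3
  generalize (9⁻¹ : ZMod p) = q at *
  linear_combination (9 * q ^ n * q ^ 2) * h + q ^ n * (((2 * (2 * n + 3) * (10 * n ^ 2 + 30 * n + 23) *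
    uu (n + 1)) : ZMod p) * q - 4 * (n + 1) * (2 * n + 1) * (2 * n + 3) * uu n * (9 * q + 1)) * hq

lemma uu_vanish {m n : ℕ} (hm : p = 2 * m + 1) (h1 : m < n) (h2 : n < p) :
    (uu n : ZMod p) = 0 := by
  unfold uu
  have hp : p.Prime := Fact.out
  have : p ∣ (2 * n).choose n := hp.dvd_choose h2 (by omega) (by omega)
  rw [← ZMod.natCast_eq_zero_iff] at this
  push_cast
  rw [this, zero_mul]

noncomputable def Wp (p m : ℕ) [Fact p.Prime] : (ZMod p)[X] :=
  ∑ n ∈ range (m + 1), C (cW p n) *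
    ((C 3 * X ^ 1 + C (-10) * X ^ 2 + C 3 * X ^ 3) ^ n * ((1 - X ^ 2) ^ 2) ^ (m - n))

/-- the derivation D d/dX -/
noncomputable def dl (p : ℕ) [Fact p.Prime] :
    Derivation (ZMod p) (PowerSeries (ZMod p)) (PowerSeries (ZMod p)) :=
  (PowerSeries.X * (3 - PowerSeries.X) * (1 - 3 * PowerSeries.X) : PowerSeries (ZMod p)) •
    PowerSeries.derivative (ZMod p)

lemma dl_apply (f : PowerSeries (ZMod p)) : dl p f =
    PowerSeries.X * (3 - PowerSeries.X) * (1 - 3 * PowerSeries.X)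
      * PowerSeries.derivative (ZMod p) f := by
  rfl

lemma dl_X : dl p PowerSeries.X =
    PowerSeries.X * (3 - PowerSeries.X) * (1 - 3 * PowerSeries.X) := by
  rw [dl_apply]; simp

lemma dl_C (c : ZMod p) : dl p (PowerSeries.C c) = 0 := by
  rw [dl_apply]; simp

lemma ps_inv (f : PowerSeries (ZMod p)) (h : PowerSeries.constantCoeff f ≠ 0) :
    f * f⁻¹ = 1 := PowerSeries.mul_inv_cancel f h

lemma Hp_ode {m : ℕ} (hm : p = 2 * m + 1) (h3 : (3 : ZMod p) ≠ 0) :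
    dl p (dl p (Hp p m : PowerSeries (ZMod p))) = 3 * (1 - PowerSeries.X) *
     (PowerSeries.X * (3 - PowerSeries.X) * (1 - 3 * PowerSeries.X)) * (Hp p m : PowerSeries (ZMod p)) := by
  have hA : (3 - 6 * PowerSeries.X - PowerSeries.X ^ 2 : PowerSeries (ZMod p)) *
      (3 - 6 * PowerSeries.X - PowerSeries.X ^ 2)⁻¹ = 1 := by
    apply ps_inv
    simp only [map_sub, map_mul, map_pow, map_ofNat, PowerSeries.constantCoeff_X]
    simpa using h3
  have hm' : 2 * (m : PowerSeries (ZMod p)) + 1 = 0 := by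
    have : ((2 * m + 1 : ℕ) : ZMod p) = 0 := by rw [← hm]; simp
    have := congrArg (PowerSeries.C (R := ZMod p)) this
    push_cast at this
    simp only [map_mul, map_add, map_natCast, map_ofNat, map_one, map_zero] at this
    exact this
  refine H_ode_abs (dl p) dl_X hA rfl m hm' (fun j => PowerSeries.C (cH p m j))
    (fun j => dl_C _) ?_ (m + 1) ?_ _ ?_
  · intro j
    have := congrArg (PowerSeries.C (R := ZMod p)) (cH_rec hm h3 j)
    simpa only [map_mul, map_add, map_sub, map_pow, map_natCast, map_ofNat, map_one, map_zero] using this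
  · simp [cH, Nat.choose_eq_zero_of_lt (show m < 2 * (m + 1) by omega)]
  · unfold Hp
    rw [← Polynomial.coeToPowerSeries.ringHom_apply, map_sum]
    apply sum_congr rfl
    intro j hj
    rcases le_or_gt (2 * j) m with h | h
    · simp only [map_mul, Polynomial.coeToPowerSeries.ringHom_apply, Polynomial.coe_C, map_pow,
        map_sub, Polynomial.coe_X, map_ofNat]
      congr 1
      obtain ⟨k, rfl⟩ := Nat.exists_eq_add_of_le h
      rw [Nat.add_sub_cancel_left, mul_pow, pow_add]
      have : ((3 - 6 * PowerSeries.X - PowerSeries.X ^ 2 : PowerSeries (ZMod p)) ^ (2 * j) *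
        ((3 - 6 * PowerSeries.X - PowerSeries.X ^ 2)⁻¹) ^ (2 * j)) = 1 := by
        rw [← mul_pow, hA, one_pow]
      rw [← pow_mul _ 2 j]
      linear_combination (-((3 - 6 * PowerSeries.X - PowerSeries.X ^ 2 : PowerSeries (ZMod p)) ^ k * (PowerSeries.X ^ 3) ^ j)) * this
    · simp [cH, Nat.choose_eq_zero_of_lt h]

lemma Wp_ode {m : ℕ} (hm : p = 2 * m + 1) (hm2 : 2 ≤ m) (h9 : (9 : ZMod p) ≠ 0) :
    LL (dl p) PowerSeries.X (PowerSeries.X * (3 - PowerSeries.X) * (1 - 3 * PowerSeries.X))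
      (Wp p m : PowerSeries (ZMod p)) = 0 := by
  have hV : (1 - PowerSeries.X ^ 2 : PowerSeries (ZMod p)) *
      (1 - PowerSeries.X ^ 2)⁻¹ = 1 := by
    apply ps_inv
    simp
  refine W_ode_abs (dl p) (E := (1 - PowerSeries.X ^ 2) ^ p) dl_X rfl hV rfl ?_
    (fun j => PowerSeries.C (cW p j)) (fun j => dl_C _) ?_ ?_ (m + 1) ?_ ?_ _ ?_
  · rw [Derivation.leibniz_pow]
    have : (p : PowerSeries (ZMod p)) = 0 := by
      have := congrArg (PowerSeries.C (R := ZMod p)) (CharP.cast_eq_zero (ZMod p) p)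
      simpa only [map_mul, map_add, map_sub, map_pow, map_natCast, map_ofNat, map_one, map_zero] using this
    rw [nsmul_eq_mul, this, zero_mul]
  · have : 9 * cW p 1 = 6 * cW p 0 := by
      simp only [cW, uu_one, uu_zero]; push_cast
      linear_combination 6 * mul_inv_cancel₀ h9
    have := congrArg (PowerSeries.C (R := ZMod p)) this
    simpa only [map_mul, map_add, map_sub, map_pow, map_natCast, map_ofNat, map_one, map_zero] using this
  · intro j
    have := congrArg (PowerSeries.C (R := ZMod p)) (cW_rec h9 j)
    simpa only [map_mul, map_add, map_sub, map_pow, map_natCast, map_ofNat, map_one, map_zero] using this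
  · simp [cW, uu_vanish hm (show m < m + 1 by omega) (by omega)]
  · simp [cW, uu_vanish hm (show m < m + 1 + 1 by omega) (by omega)]
  · unfold Wp
    rw [sum_range_succ _ (m + 1), show cW p (m + 1) = 0 by
      simp [cW, uu_vanish hm (show m < m + 1 by omega) (by omega)], map_zero, zero_mul, add_zero]
    rw [← Polynomial.coeToPowerSeries.ringHom_apply, map_sum]
    apply sum_congr rfl
    intro n hn
    have h : n ≤ m := by simp at hn; omega
    simp only [map_mul, Polynomial.coeToPowerSeries.ringHom_apply, Polynomial.coe_C, map_pow,
        map_sub, Polynomial.coe_X, map_ofNat, map_add, map_neg, map_one]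
    congr 1
    obtain ⟨k, rfl⟩ := Nat.exists_eq_add_of_le h
    rw [Nat.add_sub_cancel_left, mul_pow, ← pow_mul, ← pow_mul]
    have hpp : p = 1 + 2 * n + 2 * k := by omega
    have : (1 - PowerSeries.X ^ 2 : PowerSeries (ZMod p)) ^ p *
      ((1 - PowerSeries.X ^ 2)⁻¹ * (1 - PowerSeries.X ^ 2)⁻¹ ^ (2 * n)) =
      (1 - PowerSeries.X ^ 2 : PowerSeries (ZMod p)) ^ (2 * k) := by
      rw [show (1 - PowerSeries.X ^ 2 : PowerSeries (ZMod p)) ^ p =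
        (1 - PowerSeries.X ^ 2 : PowerSeries (ZMod p)) ^ (1 + 2 * n + 2 * k) by rw [← hpp]]
      rw [pow_add, pow_add, pow_one]
      have e2 : (1 - PowerSeries.X ^ 2 : PowerSeries (ZMod p)) ^ (2 * n) *
        (1 - PowerSeries.X ^ 2)⁻¹ ^ (2 * n) = 1 := by rw [← mul_pow, hV, one_pow]
      linear_combination (1 - PowerSeries.X ^ 2 : PowerSeries (ZMod p)) ^ (2 * k) *
        ((1 - PowerSeries.X ^ 2 : PowerSeries (ZMod p)) ^ (2 * n) *
        (1 - PowerSeries.X ^ 2)⁻¹ ^ (2 * n) * hV + e2)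
    rw [← this]
    have e3 : (3 * PowerSeries.X ^ 1 + -10 * PowerSeries.X ^ 2 + 3 * PowerSeries.X ^ 3 :
      PowerSeries (ZMod p)) = PowerSeries.X * (3 - PowerSeries.X) * (1 - 3 * PowerSeries.X) := by ring
    rw [e3]
    ring

end PS


section PS2

open Polynomial

variable {p : ℕ} [Fact p.Prime]

lemma dl_X_pow_mul (n : ℕ) (Y : PowerSeries (ZMod p)) :
    dl p (PowerSeries.X ^ n * Y) = PowerSeries.X ^ n *
      ((n : PowerSeries (ZMod p)) * ((3 - PowerSeries.X) * (1 - 3 * PowerSeries.X)) * Y + dl p Y) := by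
  have h : dl p PowerSeries.X = ((3 - PowerSeries.X) * (1 - 3 * PowerSeries.X)) * PowerSeries.X := by
    rw [dl_X]; ring
  rw [Derivation.leibniz, der_pow_eig (dl p) h]
  simp only [smul_eq_mul]; ring

lemma cc_dl (Y : PowerSeries (ZMod p)) : PowerSeries.constantCoeff (dl p Y) = 0 := by
  rw [dl_apply]; simp

lemma LL_uniq (h3 : (3 : ZMod p) ≠ 0) (Z : PowerSeries (ZMod p))
    (hL : LL (dl p) PowerSeries.X (PowerSeries.X * (3 - PowerSeries.X) * (1 - 3 * PowerSeries.X)) Z = 0)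
    (h0 : PowerSeries.constantCoeff Z = 0) (n : ℕ) (hn : n < p) : PowerSeries.X ^ (n + 1) ∣ Z := by
  induction n with
  | zero => simpa [PowerSeries.X_dvd_iff] using h0
  | succ n ih =>
    obtain ⟨Y, rfl⟩ := ih (by omega)
    rw [pow_succ]
    apply mul_dvd_mul_left
    rw [PowerSeries.X_dvd_iff]
    unfold LL at hL
    simp only [dl_X_pow_mul] at hL
    set N := n + 1
    set Y1 := (N : PowerSeries (ZMod p)) * ((3 - PowerSeries.X) * (1 - 3 * PowerSeries.X)) * Y + dl p Y with hY1
    set Y2 := (N : PowerSeries (ZMod p)) * ((3 - PowerSeries.X) * (1 - 3 * PowerSeries.X)) * Y1 + dl p Y1 with hY2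
    have hX : (PowerSeries.X ^ N : PowerSeries (ZMod p)) ≠ 0 := pow_ne_zero _ PowerSeries.X_ne_zero
    have h4 : (N : PowerSeries (ZMod p)) * ((3 - PowerSeries.X) * (1 - 3 * PowerSeries.X)) * Y2 + dl p Y2
      - PowerSeries.X * ((3 - PowerSeries.X) * (1 - 3 * PowerSeries.X)) * (12 * (1 - PowerSeries.X) * Y1
       + 6 * (-(PowerSeries.X * (3 - PowerSeries.X) * (1 - 3 * PowerSeries.X)) +
       (1 - PowerSeries.X) * (3 - 20 * PowerSeries.X + 9 * PowerSeries.X ^ 2)) * Y) = 0 := by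
      apply mul_left_cancel₀ hX
      rw [mul_zero, ← hL]
      ring
    have h5 := congrArg PowerSeries.constantCoeff h4
    have c1 := congrArg PowerSeries.constantCoeff hY1
    have c2 := congrArg PowerSeries.constantCoeff hY2
    simp only [map_sub, map_add, map_mul, map_natCast, map_ofNat, PowerSeries.constantCoeff_X, cc_dl,
      map_one, map_zero] at h5 c1 c2
    have hN : (N : ZMod p) ≠ 0 := natCast_ne (by omega) hn
    have : (27 * (N : ZMod p) ^ 3) * PowerSeries.constantCoeff Y = 0 := by
      linear_combination h5 - 3 * N * c2 - 9 * N ^ 2 * c1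
    have h27 : (27 : ZMod p) * (N : ZMod p) ^ 3 ≠ 0 := by
      rw [show (27 : ZMod p) = 3 ^ 3 by norm_num]
      exact mul_ne_zero (pow_ne_zero _ h3) (pow_ne_zero _ hN)
    exact (mul_eq_zero.mp this).resolve_left h27

lemma Hp_rec {m : ℕ} (hm : p = 2 * m + 1) (h3 : (3 : ZMod p) ≠ 0) (n : ℕ) :
    3 * ((n : ZMod p) + 2) ^ 2 * (Hp p m).coeff (n + 2) =
      (10 * (n + 1) * (n + 2) + 3) * (Hp p m).coeff (n + 1) - 3 * (n + 1) ^ 2 * (Hp p m).coeff n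
    ∧ (Hp p m).coeff 1 = (Hp p m).coeff 0 := by
  have h := Hp_ode hm h3
  simp only [← Polynomial.coeff_coe]
  set f : PowerSeries (ZMod p) := (Hp p m : PowerSeries (ZMod p))
  rw [dl_apply, dl_apply] at h
  have hD : (PowerSeries.X * (3 - PowerSeries.X) * (1 - 3 * PowerSeries.X) : PowerSeries (ZMod p)) ≠ 0 := by
    have e1 : (3 - PowerSeries.X : PowerSeries (ZMod p)) ≠ 0 := by
      intro h; have := congrArg PowerSeries.constantCoeff h
      simp only [map_sub, map_ofNat, PowerSeries.constantCoeff_X, map_zero, sub_zero] at this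
      exact h3 this
    have e2 : (1 - 3 * PowerSeries.X : PowerSeries (ZMod p)) ≠ 0 := by
      intro h; have := congrArg PowerSeries.constantCoeff h
      simp at this
    exact mul_ne_zero (mul_ne_zero PowerSeries.X_ne_zero e1) e2
  set e : PowerSeries (ZMod p) := PowerSeries.X * PowerSeries.derivative (ZMod p) f with he
  have hh : PowerSeries.derivative (ZMod p) (PowerSeries.C 3 * e + PowerSeries.C (-10) * (PowerSeries.X * e)
     + PowerSeries.C 3 * (PowerSeries.X * (PowerSeries.X * e))) =
     PowerSeries.C 3 * f - PowerSeries.C 3 * (PowerSeries.X * f) := by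
    apply mul_left_cancel₀ hD
    simp only [map_ofNat, map_neg]
    have : (3 * e + -10 * (PowerSeries.X * e) + 3 * (PowerSeries.X * (PowerSeries.X * e)) : PowerSeries (ZMod p))
      = PowerSeries.X * (3 - PowerSeries.X) * (1 - 3 * PowerSeries.X) * PowerSeries.derivative (ZMod p) f := by
      rw [he]; ring
    rw [this, h]; ring
  have hen : ∀ k, PowerSeries.coeff k e = k * PowerSeries.coeff k f := by
    intro k
    rw [he]
    cases k with
    | zero => simp
    | succ k => rw [PowerSeries.coeff_succ_X_mul, PowerSeries.coeff_derivative]; push_cast; ring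
  constructor
  · have := congrArg (PowerSeries.coeff (n + 1)) hh
    rw [PowerSeries.coeff_derivative] at this
    simp only [map_add, map_sub, PowerSeries.coeff_C_mul, PowerSeries.coeff_succ_X_mul, hen] at this
    push_cast at this
    linear_combination this
  · have := congrArg (PowerSeries.coeff 0) hh
    rw [PowerSeries.coeff_derivative] at this
    simp only [map_add, map_sub, PowerSeries.coeff_C_mul, PowerSeries.coeff_succ_X_mul, hen,
      PowerSeries.coeff_zero_X_mul] at this
    push_cast at this
    apply mul_left_cancel₀ h3
    linear_combination this

lemma Hp_natDegree (m : ℕ) : (Hp p m).natDegree ≤ 2 * m := by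
  unfold Hp
  apply natDegree_sum_le_of_forall_le
  intro j hj
  rcases le_or_gt (2 * j) m with h | h
  · have h1 : (3 - 6 * X - X ^ 2 : (ZMod p)[X]).natDegree ≤ 2 := by compute_degree
    have h2 := natDegree_pow_le_of_le (m - 2 * j) h1
    have h3 : ((X ^ 3 : (ZMod p)[X]) ^ j).natDegree ≤ j * 3 :=
      natDegree_pow_le_of_le j (natDegree_X_pow_le 3)
    have := natDegree_mul_le_of_le h2 h3
    refine (natDegree_C_mul_le _ _).trans (this.trans (by omega))
  · simp [cH, Nat.choose_eq_zero_of_lt h]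

lemma Hp_coeff_zero (m : ℕ) : (Hp p m).coeff 0 = 3 ^ m := by
  rw [coeff_zero_eq_eval_zero, Hp, eval_finsetSum, sum_eq_single 0]
  · simp [cH]
  · intro j _ hj; simp [hj]
  · simp

lemma Hp_sym {m : ℕ} (hm : p = 2 * m + 1) (h3 : (3 : ZMod p) ≠ 0) :
    ∃ c : ZMod p, c ^ 2 = 1 ∧ reflect (2 * m) (Hp p m) = C c * Hp p m := by
  have hm' : 2 * (m : ZMod p) + 1 = 0 := by
    have : ((2 * m + 1 : ℕ) : ZMod p) = 0 := by rw [← hm]; simp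
    exact_mod_cast this
  have hrec := fun n => (Hp_rec hm h3 n).1
  have h10 := (Hp_rec hm h3 0).2
  have hh0 : (Hp p m).coeff 0 ≠ 0 := by rw [Hp_coeff_zero]; exact pow_ne_zero _ h3
  have hbig : ∀ n, 2 * m < n → (Hp p m).coeff n = 0 := fun n hn =>
    coeff_eq_zero_of_natDegree_lt (lt_of_le_of_lt (Hp_natDegree m) hn)
  have hmpos : 0 < m := by
    rcases Nat.eq_zero_or_pos m with h | h
    · have : p.Prime := Fact.out
      subst h; simp at hm; subst hm; exact absurd this (by norm_num)
    · exact h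
  generalize (Hp p m) = f at *
  have key : ∀ n, n ≤ 2 * m → f.coeff 0 * f.coeff (2 * m - n) = f.coeff (2 * m) * f.coeff n := by
    intro n
    induction n using Nat.strong_induction_on with
    | _ n ih =>
      intro hn
      match n, ih, hn with
      | 0, _, _ => simp [mul_comm]
      | 1, _, _ =>
        have := hrec (2 * m - 1)
        rw [show 2 * m - 1 + 2 = 2 * m + 1 by omega, show 2 * m - 1 + 1 = 2 * m by omega,
          hbig _ (show 2 * m < 2 * m + 1 by omega), Nat.cast_sub (by omega)] at this
        push_cast at this
        have e : f.coeff (2 * m - 1) = f.coeff (2 * m) := by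
          apply mul_left_cancel₀ h3
          linear_combination this + (3 * (1 - 2 * m) * f.coeff (2 * m - 1) + 20 * m * f.coeff (2 * m)) * hm'
        rw [e, h10]; ring
      | n + 2, ih, hn =>
        have i1 := ih (n + 1) (by omega) (by omega)
        have i0 := ih n (by omega) (by omega)
        obtain ⟨k, hk⟩ := Nat.exists_eq_add_of_le hn
        rw [show 2 * m - (n + 2) = k by omega]
        rw [show 2 * m - (n + 1) = k + 1 by omega] at i1
        rw [show 2 * m - n = k + 2 by omega] at i0
        have hk' : (k : ZMod p) = - (n + 3) := by
          have := congrArg (Nat.cast (R := ZMod p)) hk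
          push_cast at this
          linear_combination hm' - this
        have r1 := hrec k
        have r2 := hrec n
        rw [hk'] at r1
        have hne : (3 : ZMod p) * ((n + 2 : ℕ) : ZMod p) ^ 2 ≠ 0 :=
          mul_ne_zero h3 (pow_ne_zero _ (natCast_ne (by omega) (by omega)))
        apply mul_left_cancel₀ hne
        push_cast
        linear_combination f.coeff 0 * r1 - f.coeff (2 * m) * r2
          + (10 * (n + 1) * (n + 2) + 3) * i1 - 3 * (n + 1) ^ 2 * i0
  refine ⟨f.coeff (2 * m) / f.coeff 0, ?_, ?_⟩
  · have := key (2 * m) le_rfl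
    rw [Nat.sub_self] at this
    rw [div_pow, div_eq_one_iff_eq (pow_ne_zero _ hh0)]
    linear_combination -this
  · ext i
    rw [coeff_reflect, coeff_C_mul]
    rcases le_or_gt i (2 * m) with h | h
    · rw [revAt_le h]
      have := key i h
      field_simp
      linear_combination this
    · rw [revAt_eq_self_of_lt h, hbig i h, mul_zero]

/-- palindromic polynomials of weight `N` -/
def PSym (N : ℕ) (f : (ZMod p)[X]) : Prop := f.natDegree ≤ N ∧ reflect N f = f

lemma PSym.mul {M N : ℕ} {f g : (ZMod p)[X]} (hf : PSym M f) (hg : PSym N g) : PSym (M + N) (f * g) :=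
  ⟨natDegree_mul_le_of_le hf.1 hg.1, by rw [reflect_mul f g hf.1 hg.1, hf.2, hg.2]⟩

lemma PSym.pow {N : ℕ} {f : (ZMod p)[X]} (hf : PSym N f) (n : ℕ) : PSym (N * n) (f ^ n) := by
  induction n with
  | zero => refine ⟨by simp, ?_⟩; simp
  | succ n ih => rw [pow_succ, Nat.mul_succ]; exact ih.mul hf

lemma PSym.C_mul {N : ℕ} {f : (ZMod p)[X]} (hf : PSym N f) (c : ZMod p) : PSym N (C c * f) :=
  ⟨(natDegree_C_mul_le _ _).trans hf.1, by rw [reflect_C_mul, hf.2]⟩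

lemma PSym.add {N : ℕ} {f g : (ZMod p)[X]} (hf : PSym N f) (hg : PSym N g) : PSym N (f + g) :=
  ⟨natDegree_add_le_of_degree_le hf.1 hg.1, by rw [reflect_add, hf.2, hg.2]⟩

lemma PSym.neg {N : ℕ} {f : (ZMod p)[X]} (hf : PSym N f) : PSym N (-f) := by
  have := hf.C_mul (-1); simpa using this

lemma PSym.sum {N : ℕ} (f : ℕ → (ZMod p)[X]) (s : Finset ℕ) (h : ∀ i ∈ s, PSym N (f i)) :
    PSym N (∑ i ∈ s, f i) := by
  induction s using Finset.induction_on with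
  | empty => exact ⟨by simp, by simp⟩
  | insert i s hi ih =>
    rw [sum_insert hi]
    exact (h i (by simp)).add (ih fun j hj => h j (by simp [hj]))

lemma symD : PSym 4 (C 3 * X ^ 1 + C (-10) * X ^ 2 + C 3 * X ^ 3 : (ZMod p)[X]) := by
  refine ⟨by compute_degree!, ?_⟩
  simp only [reflect_add, reflect_C_mul_X_pow]
  rw [revAt_le (by norm_num), revAt_le (by norm_num), revAt_le (by norm_num)]
  norm_num
  ring

lemma symV : PSym 4 ((1 - X ^ 2) ^ 2 : (ZMod p)[X]) := by
  have : ((1 - X ^ 2) ^ 2 : (ZMod p)[X]) = C 1 * X ^ 0 + C (-2) * X ^ 2 + C 1 * X ^ 4 := by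
    simp only [map_neg, map_one, map_ofNat]; ring
  rw [this]
  refine ⟨by compute_degree!, ?_⟩
  simp only [reflect_add, reflect_C_mul_X_pow]
  rw [revAt_le (by norm_num), revAt_le (by norm_num), revAt_le (by norm_num)]
  norm_num
  ring

lemma Wp_sym (m : ℕ) : PSym (4 * m) (Wp p m) := by
  unfold Wp
  apply PSym.sum
  intro n hn
  apply PSym.C_mul
  have := (symD (p := p).pow n).mul (symV (p := p).pow (m - n))
  rwa [show 4 * n + 4 * (m - n) = 4 * m by simp at hn; omega] at this

lemma Hp_sq_sym {m : ℕ} (hm : p = 2 * m + 1) (h3 : (3 : ZMod p) ≠ 0) :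
    PSym (4 * m) (Hp p m ^ 2) := by
  obtain ⟨c, hc, h⟩ := Hp_sym hm h3
  have hd := Hp_natDegree (p := p) m
  rw [sq, show 4 * m = 2 * m + 2 * m by ring]
  refine ⟨natDegree_mul_le_of_le hd hd, ?_⟩
  rw [reflect_mul _ _ hd hd, h]
  have : (C c * C c : (ZMod p)[X]) = 1 := by rw [← C_mul, ← sq, hc, C_1]
  linear_combination (Hp p m) ^ 2 * this

lemma Wp_coeff_zero (m : ℕ) : (Wp p m).coeff 0 = 1 := by
  rw [coeff_zero_eq_eval_zero, Wp, eval_finsetSum, sum_eq_single 0]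
  · simp [cW, uu_zero]
  · intro j _ hj; simp [hj]
  · simp

theorem Hp_sq_eq {m : ℕ} (hm : p = 2 * m + 1) (hm2 : 2 ≤ m) (h3 : (3 : ZMod p) ≠ 0) :
    Hp p m ^ 2 = Wp p m := by
  have hS : PSym (4 * m) (Hp p m ^ 2 + - Wp p m) := (Hp_sq_sym hm h3).add (Wp_sym m).neg
  have h9 : (9 : ZMod p) ≠ 0 := by
    rw [show (9 : ZMod p) = 3 ^ 2 by norm_num]; exact pow_ne_zero _ h3
  have hL : LL (dl p) PowerSeries.X (PowerSeries.X * (3 - PowerSeries.X) * (1 - 3 * PowerSeries.X))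
      ((Hp p m ^ 2 + - Wp p m : (ZMod p)[X]) : PowerSeries (ZMod p)) = 0 := by
    rw [← sub_eq_add_neg, Polynomial.coe_sub, Polynomial.coe_pow, LL_sub, Wp_ode hm hm2 h9,
      LL_sq (dl p) dl_X rfl (Hp_ode hm h3), sub_zero]
  have h0 : PowerSeries.constantCoeff ((Hp p m ^ 2 + - Wp p m : (ZMod p)[X]) : PowerSeries (ZMod p)) = 0 := by
    rw [← PowerSeries.coeff_zero_eq_constantCoeff_apply, Polynomial.coeff_coe, coeff_add, coeff_neg, Wp_coeff_zero, sq,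
      mul_coeff_zero, Hp_coeff_zero, ← pow_add]
    have := ZMod.pow_card_sub_one_eq_one h3
    rw [show m + m = p - 1 by omega, this]; ring
  have hd := LL_uniq h3 _ hL h0
  generalize hfd : (Hp p m ^ 2 + - Wp p m : (ZMod p)[X]) = f at *
  have hlow : ∀ n, n < p → f.coeff n = 0 := by
    intro n hn
    rw [← Polynomial.coeff_coe]
    exact (PowerSeries.X_pow_dvd_iff.mp (hd n hn)) n (by omega)
  have hf : f = 0 := by
    ext n
    rw [coeff_zero]
    rcases lt_or_ge n p with h | h
    · exact hlow n h
    rcases le_or_gt n (4 * m) with h' | h'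
    · rw [← hS.2, coeff_reflect, revAt_le h']
      exact hlow _ (by omega)
    · exact coeff_eq_zero_of_natDegree_lt (lt_of_le_of_lt hS.1 h')
  linear_combination hfd + hf

end PS2

section Eval

open Polynomial

variable {p : ℕ} [Fact p.Prime]

lemma S_eq {m : ℕ} (hm : p = 2 * m + 1) (hm2 : 2 ≤ m) (h2 : (2 : ZMod p) ≠ 0)
    (h3 : (3 : ZMod p) ≠ 0) (s : ZMod p) (hs : s ^ 2 = 3) :
    (∑ k ∈ Finset.range p, (Nat.choose (2 * k) k : ZMod p) * (a k : ZMod p) / (-12 : ZMod p) ^ k)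
      = (Hp p m).eval (-3 + 2 * s) ^ 2 := by
  rw [← eval_pow, Hp_sq_eq hm hm2 h3, Wp, eval_finsetSum]
  have e1 : (∑ k ∈ Finset.range p, (Nat.choose (2 * k) k : ZMod p) * (a k : ZMod p) / (-12 : ZMod p) ^ k)
     = ∑ k ∈ Finset.range (m + 1), (Nat.choose (2 * k) k : ZMod p) * (a k : ZMod p) / (-12 : ZMod p) ^ k := by
    symm
    apply sum_subset
    · intro k hk; simp at hk ⊢; omega
    · intro k hk hk'
      simp at hk hk'
      have := uu_vanish hm (show m < k by omega) hk
      unfold uu at this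
      push_cast at this
      rw [this, zero_div]
  rw [e1]
  apply sum_congr rfl
  intro n hn
  have hn' : n ≤ m := by simp at hn; omega
  have h4 : (4 : ZMod p) ≠ 0 := by
    rw [show (4 : ZMod p) = 2 ^ 2 by norm_num]; exact pow_ne_zero _ h2
  have h9 : (9 : ZMod p) ≠ 0 := by
    rw [show (9 : ZMod p) = 3 ^ 2 by norm_num]; exact pow_ne_zero _ h3
  have h12 : (12 : ZMod p) ≠ 0 := by
    rw [show (12 : ZMod p) = 4 * 3 by norm_num]; exact mul_ne_zero h4 h3
  have hV0 : (1 - (-3 + 2 * s) ^ 2 : ZMod p) ≠ 0 := by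
    intro h
    have : (2 * 4 : ZMod p) = 0 := by
      linear_combination (3 * s + 5) * h + (12 * s - 16) * hs
    exact mul_ne_zero h2 h4 this
  have hVm : ((1 - (-3 + 2 * s) ^ 2 : ZMod p) ^ 2) ^ m = 1 := by
    have := ZMod.pow_card_sub_one_eq_one hV0
    rw [← pow_mul, show 2 * m = p - 1 by omega, this]
  have hD : (3 * (-3 + 2 * s) ^ 1 + (-10) * (-3 + 2 * s) ^ 2 + 3 * (-3 + 2 * s) ^ 3 : ZMod p)
      = (9 * (-12)⁻¹) * (1 - (-3 + 2 * s) ^ 2) ^ 2 := by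
    have h12' : (-12 : ZMod p) ≠ 0 := neg_ne_zero.mpr h12
    have : (-12 : ZMod p) * (-12)⁻¹ = 1 := mul_inv_cancel₀ h12'
    apply mul_left_cancel₀ h12'
    linear_combination (-9 * (1 - (-3 + 2 * s) ^ 2) ^ 2) * this + (-144 * s ^ 2 + 576 * s - 528) * hs
  simp only [eval_mul, eval_C, eval_pow, eval_add, eval_X, eval_sub, eval_one]
  rw [hD, mul_pow (9 * (-12 : ZMod p)⁻¹), mul_assoc, ← pow_add, Nat.add_sub_cancel' hn', hVm, mul_one, mul_pow,
    cW, uu]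
  push_cast
  have h9' : (9⁻¹ : ZMod p) ^ n * 9 ^ n = 1 := by rw [← mul_pow, inv_mul_cancel₀ h9, one_pow]
  rw [div_eq_mul_inv, ← inv_pow]
  generalize (-12 : ZMod p)⁻¹ = r
  generalize (9 : ZMod p)⁻¹ = q at *
  linear_combination (- (Nat.choose (2 * n) n : ZMod p) * (a n : ZMod p) * r ^ n) * h9'

lemma Hp_odd {m : ℕ} (hm : m % 2 = 1) (s : ZMod p) (hs : s ^ 2 = 3) :
    (Hp p m).eval (-3 + 2 * s) = 0 := by
  rw [Hp, eval_finsetSum]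
  apply sum_eq_zero
  intro j _
  rcases lt_or_ge m (2 * j) with h | h
  · simp [cH, Nat.choose_eq_zero_of_lt h]
  · have hA : (3 - 6 * (-3 + 2 * s) - (-3 + 2 * s) ^ 2 : ZMod p) = 0 := by
      linear_combination (-4) * hs
    simp only [eval_mul, eval_C, eval_pow, eval_X, eval_sub, eval_ofNat]
    rw [hA, zero_pow (by omega)]; ring

lemma Hp_even (k : ℕ) (s : ZMod p) (hs : s ^ 2 = 3) :
    (Hp p (2 * k)).eval (-3 + 2 * s) = ((2 * k).choose k : ℕ) * (16 / 3) ^ k * (-3 + 2 * s) ^ (3 * k) := by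
  rw [Hp, eval_finsetSum, sum_eq_single k]
  · simp [cH, pow_mul]
  · intro j _ hjk
    rcases lt_or_ge (2 * k) (2 * j) with h | h
    · simp [cH, Nat.choose_eq_zero_of_lt h]
    · have hA : (3 - 6 * (-3 + 2 * s) - (-3 + 2 * s) ^ 2 : ZMod p) = 0 := by
        linear_combination (-4) * hs
      simp only [eval_mul, eval_C, eval_pow, eval_X, eval_sub, eval_ofNat]
      rw [hA, zero_pow (by omega)]; ring
  · intro h; simp at h; omega

lemma Hp_even_sq {k : ℕ} (hk : p = 4 * k + 1) (h2 : (2 : ZMod p) ≠ 0)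
    (h3 : (3 : ZMod p) ≠ 0) (s : ZMod p) (hs : s ^ 2 = 3) (i : ZMod p) (hi : i ^ 2 = -1) :
    (Hp p (2 * k)).eval (-3 + 2 * s) ^ 2 = ((2 * k).choose k : ℕ) ^ 2 * (-3) ^ k := by
  rw [Hp_even k s hs]
  have fer : ∀ x : ZMod p, x ≠ 0 → x ^ (4 * k) = 1 := by
    intro x hx
    have := ZMod.pow_card_sub_one_eq_one hx
    rwa [show p - 1 = 4 * k by omega] at this
  have hs0 : s ≠ 0 := by rintro rfl; apply h3; rw [← hs]; ring
  have hy0 : (-3 + 2 * s) ≠ 0 := by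
    intro h; apply h3
    linear_combination (2 * s + 3) * h - 4 * hs
  have hs1 : s - 1 ≠ 0 := by
    intro h; apply h2
    linear_combination (s + 1) * h - hs
  have hi1 : 1 + i ≠ 0 := by
    intro h; apply h2
    linear_combination (1 - i) * h + hi
  have e3 : (3 : ZMod p) ^ (2 * k) = 1 := by
    rw [← hs, ← pow_mul, show 2 * (2 * k) = 4 * k by ring, fer s hs0]
  have e16 : (16 : ZMod p) ^ (2 * k) = 1 := by
    rw [show (16 : ZMod p) = 2 ^ 4 by norm_num, ← pow_mul, mul_comm 4, mul_assoc, mul_comm k 4, mul_comm 2, pow_mul,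
      fer 2 h2, one_pow]
  have ey : (-3 + 2 * s) ^ (2 * k) = (-3) ^ k := by
    have h1 : (-3 + 2 * s) * (1 + i) ^ 2 = (i * s) * (s - 1) ^ 2 := by
      linear_combination (-3 + 2 * s) * hi + (2 * i - i * s) * hs
    have h4 := congrArg (· ^ (2 * k)) h1
    simp only [mul_pow, ← pow_mul] at h4
    rw [show 2 * (2 * k) = 4 * k by ring, fer _ hi1, fer _ hs1, mul_one, mul_one] at h4
    rw [h4, pow_mul, pow_mul, hi, hs, ← mul_pow]; norm_num
  have e : (((2 * k).choose k : ℕ) * (16 / 3) ^ k * (-3 + 2 * s) ^ (3 * k) : ZMod p) ^ 2 =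
    ((2 * k).choose k : ℕ) ^ 2 * (16 ^ (2 * k) / 3 ^ (2 * k)) * ((-3 + 2 * s) ^ (4 * k) * (-3 + 2 * s) ^ (2 * k)) := by
    rw [← div_pow]; ring
  rw [e, e3, e16, fer _ hy0, ey]; ring

lemma exists_sqrt_three (hp : p % 12 = 1 ∨ p % 12 = 11) : ∃ s : ZMod p, s ^ 2 = 3 := by
  have h23 : ¬ IsSquare ((2 : ℕ) : ZMod 3) := by decide
  have : Fact (Nat.Prime 3) := ⟨by norm_num⟩
  have key : IsSquare ((3 : ℕ) : ZMod p) := by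
    have hc : (p : ZMod 3) = ((p % 3 : ℕ) : ZMod 3) := by simp
    rcases hp with h | h
    · rw [ZMod.exists_sq_eq_prime_iff_of_mod_four_eq_one (by omega) (by norm_num), hc,
        show p % 3 = 1 by omega]
      exact ⟨1, by norm_num⟩
    · rw [ZMod.exists_sq_eq_prime_iff_of_mod_four_eq_three (by omega) (by norm_num) (by omega), hc,
        show p % 3 = 2 by omega]
      exact h23
  obtain ⟨s, hs⟩ := key
  exact ⟨s, by rw [sq, ← hs]; norm_num⟩

end Eval

section Quartic

variable {p : ℕ} [Fact p.Prime]

lemma sum_pow_all {n : ℕ} (hn : n ≠ 0) :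
    ∑ x : ZMod p, x ^ n = if p - 1 ∣ n then -1 else 0 := by
  have h := FiniteField.sum_pow_units (ZMod p) n
  rw [ZMod.card] at h
  rw [← h]
  symm
  have h0 : ∑ x : ZMod p, x ^ n = ∑ x ∈ univ.filter (fun x : ZMod p => x ≠ 0), x ^ n := by
    symm
    apply sum_subset (filter_subset _ _)
    intro x _ hx
    simp at hx
    rw [hx, zero_pow hn]
  rw [h0]
  refine sum_bij (fun x _ => (x : ZMod p)) ?_ ?_ ?_ ?_
  · intro x _; simp
  · intro x _ y _ hxy; exact Units.ext hxy
  · intro b hb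
    simp at hb
    exact ⟨Units.mk0 b hb, by simp, rfl⟩
  · intro x _; simp

lemma sum_beta {a' b : ℕ} (ha : a' ≠ 0) :
    ∑ x : ZMod p, x ^ a' * (1 - x) ^ b =
      ∑ j ∈ range (b + 1), (-1) ^ j * (b.choose j : ZMod p) * (if p - 1 ∣ a' + j then -1 else 0) := by
  have : ∀ x : ZMod p, x ^ a' * (1 - x) ^ b =
      ∑ j ∈ range (b + 1), (-1) ^ j * (b.choose j : ZMod p) * x ^ (a' + j) := by
    intro x
    rw [show 1 - x = (-1) * x + 1 by ring, add_pow, mul_sum]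
    apply sum_congr rfl
    intro j _
    rw [mul_pow]; ring
  simp_rw [this]
  rw [sum_comm]
  apply sum_congr rfl
  intro j _
  rw [← mul_sum, sum_pow_all (by omega)]

lemma sum_beta_zero {k : ℕ} (hk : p = 4 * k + 1) (hk0 : 0 < k) :
    ∑ x : ZMod p, x ^ k * (1 - x) ^ (2 * k) = 0 := by
  rw [sum_beta (by omega)]
  apply sum_eq_zero
  intro j hj
  rw [if_neg, mul_zero]
  intro h
  simp at hj
  have := Nat.le_of_dvd (by omega) h
  omega

lemma sum_beta_main {k : ℕ} (hk : p = 4 * k + 1) (hk0 : 0 < k) :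
    ∑ x : ZMod p, x ^ (3 * k) * (1 - x) ^ (2 * k) = - ((-1) ^ k * ((2 * k).choose k : ZMod p)) := by
  rw [sum_beta (by omega), sum_eq_single k]
  · rw [if_pos]
    · ring
    · exact ⟨1, by omega⟩
  · intro j hj hjk
    rw [if_neg, mul_zero]
    rintro ⟨c, hc⟩
    simp at hj
    rw [show p - 1 = 4 * k by omega] at hc
    rcases Nat.lt_or_ge c 2 with h | h
    · interval_cases c <;> omega
    · have : 4 * k * 2 ≤ 4 * k * c := Nat.mul_le_mul_left _ h
      omega
  · intro h; simp at h; omega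

lemma char_facts {K : Type*} [Field K] (h2 : (2 : K) ≠ 0) (χ : MulChar (ZMod p) K) (g : (ZMod p)ˣ)
    (hg : χ g ^ 2 = -1) : χ ≠ 1 ∧ χ ^ 2 ≠ 1 ∧ χ * χ ^ 2 ≠ 1 := by
  have e2 : χ ^ 2 ≠ 1 := by
    intro h
    have := congrArg (fun f : MulChar (ZMod p) K => f g) h
    simp only [MulChar.pow_apply_coe, MulChar.one_apply_coe] at this
    rw [hg] at this
    apply h2; linear_combination -this
  refine ⟨?_, e2, ?_⟩
  · rintro rfl; simp at e2
  · intro h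
    have := congrArg (fun f : MulChar (ZMod p) K => f g) h
    simp only [MulChar.mul_apply, MulChar.pow_apply_coe, MulChar.one_apply_coe] at this
    rw [hg] at this
    apply h2
    linear_combination (χ g - 1) * this + hg

lemma jacobi_mod_three {K : Type*} [Field K] [CharP K 3] (hp3 : p % 3 = 1)
    (χ : MulChar (ZMod p) K) (g : (ZMod p)ˣ)
    (hg : χ g ^ 2 = -1) (h4 : χ ^ 4 = 1) (ψ : AddChar (ZMod p) K) (hψ : ψ.IsPrimitive) :
    jacobiSum χ (χ ^ 2) ^ 2 = χ (-3) := by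
  have : Fact (Nat.Prime 3) := ⟨by norm_num⟩
  have h3K : (3 : K) = 0 := by exact_mod_cast CharP.cast_eq_zero K 3
  have h2K : (2 : K) ≠ 0 := by
    intro h; apply one_ne_zero (α := K); linear_combination h3K - h
  have hpK : (p : K) = 1 := by
    rw [← Nat.div_add_mod p 3, hp3]; push_cast; rw [h3K]; ring
  have hpK' : (Fintype.card (ZMod p) : K) = 1 := by rw [ZMod.card, hpK]
  have h3 : (3 : ZMod p) ≠ 0 := by
    have : p.Prime := Fact.out
    intro h
    have h' : ((3 : ℕ) : ZMod p) = 0 := by exact_mod_cast h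
    rw [ZMod.natCast_eq_zero_iff] at h'
    have := (Nat.prime_dvd_prime_iff_eq this (by norm_num)).mp h'
    omega
  obtain ⟨c1, c2, c3⟩ := char_facts h2K χ g hg
  have inv1 : χ⁻¹ = χ ^ 3 := by
    rw [inv_eq_iff_mul_eq_one, ← pow_succ', h4]
  have inv2 : (χ ^ 2)⁻¹ = χ ^ 2 := by
    rw [inv_eq_iff_mul_eq_one, ← pow_add, h4]
  have hJ := jacobiSum_mul_nontrivial c3 ψ
  rw [← pow_succ'] at hJ
  have hE1 := gaussSum_mul_gaussSum_eq_card c2 hψ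
  have hE2 := mul_gaussSum_inv_eq_gaussSum (χ ^ 2) ψ
  rw [inv2, hpK'] at hE1
  have hG1 := gaussSum_mul_gaussSum_eq_card c1 hψ
  have hG2 := mul_gaussSum_inv_eq_gaussSum (χ ^ 3) ψ
  rw [inv1, hpK'] at hG1
  have hF := gaussSum_frob 3 χ ψ
  rw [AddChar.pow_mulShift] at hF
  have hS := gaussSum_mulShift (χ ^ 3) ψ (Units.mk0 3 h3)
  simp only [Units.val_mk0] at hS
  simp only [Nat.cast_ofNat] at hF
  rw [← hF] at hS
  have hd : χ (-1) ^ 2 = 1 := by rw [← map_pow]; simp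
  have hc : χ 3 ^ 4 = 1 := by
    have h5 : (χ ^ 4) (Units.mk0 3 h3 : (ZMod p)ˣ) = 1 := by rw [h4, MulChar.one_apply_coe]
    rw [MulChar.pow_apply_coe] at h5
    exact h5
  rw [MulChar.pow_apply' χ (by norm_num)] at hE2 hG2 hS
  have hcd : χ (-3) = χ (-1) * χ 3 := by rw [← map_mul]; norm_num
  rw [hcd]
  generalize gaussSum χ ψ = G at *
  generalize gaussSum (χ ^ 2) ψ = E at *
  generalize gaussSum (χ ^ 2) ψ⁻¹ = E' at *
  generalize gaussSum (χ ^ 3) ψ = G3 at *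
  generalize gaussSum (χ ^ 3) ψ⁻¹ = G3' at *
  generalize jacobiSum χ (χ ^ 2) = J at *
  generalize χ (-1) = d at *
  generalize χ 3 = c at *
  have e1 : E ^ 2 = 1 := by
    linear_combination (-E) * hE2 + E * E' * hd + hE1
  have e2 : G * G3 = d := by
    linear_combination (-G) * hG2 + G * G3' * d * hd + d * hG1
  have e3 : G ^ 4 = d * c := by
    linear_combination c * G * hS + c * e2 - G ^ 4 * hc
  have e4 : (G * G3) ^ 2 * J ^ 2 = G ^ 4 * E ^ 2 := by
    linear_combination G ^ 2 * (G3 * J + G * E) * hJ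
  rw [e2, hd, e1, e3] at e4
  linear_combination e4

lemma two_sq_unique {q x z A B : ℤ} (hq : Prime q) (hq0 : 0 < q) (h1 : q = x ^ 2 + z ^ 2)
    (h2 : A ^ 2 + B ^ 2 = q) : x ^ 2 = A ^ 2 ∨ x ^ 2 = B ^ 2 := by
  have main : ∀ z : ℤ, q = x ^ 2 + z ^ 2 → q ∣ x * B - A * z → x ^ 2 = A ^ 2 ∨ x ^ 2 = B ^ 2 := by
    rintro z h1 ⟨t, ht⟩
    have e : (x * A + z * B) ^ 2 + q ^ 2 * t ^ 2 = q ^ 2 := by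
      have : (x * A + z * B) ^ 2 + (x * B - A * z) ^ 2 = q ^ 2 := by
        linear_combination (A ^ 2 + B ^ 2) * (-h1) + q * h2
      rw [ht] at this; linear_combination this
    have hq2 : 0 < q ^ 2 := by positivity
    have ht1 : t ^ 2 ≤ 1 := by nlinarith [sq_nonneg (x * A + z * B)]
    have ht2 : t ^ 2 = 0 ∨ t ^ 2 = 1 := by have := sq_nonneg t; omega
    rcases ht2 with h | h
    · left
      have h0 : t = 0 := by simpa using h
      rw [h0, mul_zero] at ht
      apply mul_left_cancel₀ hq0.ne'
      linear_combination (x * B + A * z) * ht - A ^ 2 * h1 - x ^ 2 * h2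
    · right
      rw [h] at e
      have h0 : x * A + z * B = 0 := by
        have : (x * A + z * B) ^ 2 = 0 := by linear_combination e
        simpa using this
      apply mul_left_cancel₀ hq0.ne'
      linear_combination (x * A - z * B) * h0 - x ^ 2 * h2 - B ^ 2 * h1
  have hd : q ∣ (x * B - A * z) * (x * B - A * (-z)) :=
    ⟨x ^ 2 - A ^ 2, by linear_combination x ^ 2 * h2 + A ^ 2 * h1⟩
  rcases hq.dvd_or_dvd hd with h | h
  · exact main z h1 h
  · exact main (-z) (by rw [h1]; ring) h

end Quartic

section Quartic2

variable {p : ℕ} [Fact p.Prime]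

/-- the unit `i` of the Gaussian integers -/
def gi : GaussianIntˣ := ⟨⟨0, 1⟩, ⟨0, -1⟩, by decide, by decide⟩

lemma gi_sq : ((gi : GaussianInt)) ^ 2 = -1 := by decide

lemma gi_pow_four : gi ^ 4 = 1 := by
  apply Units.ext
  rw [Units.val_pow_eq_pow_val, show 4 = 2 * 2 from rfl, pow_mul, gi_sq]; norm_num

lemma exists_quartic {k : ℕ} (hk : p = 4 * k + 1) (hk0 : 0 < k) :
    ∃ (χ : MulChar (ZMod p) GaussianInt) (g : (ZMod p)ˣ), (∀ t : (ZMod p)ˣ, ∃ n : ℕ, t = g ^ n) ∧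
      χ g = gi ∧ χ ^ 4 = 1 ∧ ((g : ZMod p) ^ k) ^ 2 = -1 := by
  obtain ⟨g, hg⟩ := IsCyclic.exists_generator (α := (ZMod p)ˣ)
  have hcard : Fintype.card (ZMod p)ˣ = 4 * k := by
    rw [ZMod.card_units p]; omega
  have hgi : gi ∈ rootsOfUnity (Fintype.card (ZMod p)ˣ) GaussianInt := by
    rw [mem_rootsOfUnity, hcard, pow_mul, gi_pow_four, one_pow]
  refine ⟨MulChar.ofRootOfUnity hgi hg, g, ?_, MulChar.ofRootOfUnity_spec hgi hg, ?_, ?_⟩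
  · intro t
    obtain ⟨n, hn⟩ := (mem_powers_iff_mem_zpowers.mpr (hg t))
    exact ⟨n, hn.symm⟩
  · rw [MulChar.eq_iff hg, MulChar.pow_apply_coe, MulChar.ofRootOfUnity_spec, MulChar.one_apply_coe]
    rw [← Units.val_pow_eq_pow_val, gi_pow_four, Units.val_one]
  · have ho : orderOf g = 4 * k := by
      rw [orderOf_eq_card_of_forall_mem_zpowers hg, Nat.card_eq_fintype_card, hcard]
    have h1 : (((g : ZMod p) ^ k) ^ 2) ^ 2 = 1 := by
      rw [← pow_mul, ← pow_mul, show k * (2 * 2) = 4 * k by ring, ← ho]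
      rw [← Units.val_pow_eq_pow_val, pow_orderOf_eq_one, Units.val_one]
    rcases sq_eq_one_iff.mp h1 with h | h
    · exfalso
      have h' : g ^ (k * 2) = 1 := by
        apply Units.ext
        rw [Units.val_pow_eq_pow_val, pow_mul, h, Units.val_one]
      have := Nat.le_of_dvd (by omega) (orderOf_dvd_of_pow_eq_one h')
      omega
    · exact h

lemma cast_zero_of_three_dvd {K : Type*} [Field K] (h3 : (3 : K) = 0) (z : ℤ) (hz : 3 ∣ z) :
    (z : K) = 0 := by
  obtain ⟨w, rfl⟩ := hz
  push_cast
  rw [h3, zero_mul]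

lemma cast_one_of_mod_three {K : Type*} [Field K] (h3 : (3 : K) = 0) (z : ℤ) (hz : z % 3 = 1) :
    (z : K) = 1 := by
  have h := cast_zero_of_three_dvd h3 (z - 1) (by omega)
  push_cast at h
  linear_combination h

lemma val_hom {R : Type*} [CommRing R] (χ : MulChar (ZMod p) GaussianInt) (g : (ZMod p)ˣ)
    (hg : χ g = gi) (f : GaussianInt →+* R) (n : ℕ) :
    f (χ ((g ^ n : (ZMod p)ˣ) : ZMod p)) = f gi ^ n := by
  rw [Units.val_pow_eq_pow_val, map_pow, map_pow, hg]

lemma quartic_main {k : ℕ} (hk : p = 4 * k + 1) (hp3 : p % 3 = 1) (hk0 : 0 < k)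
    (hs : (3 : ZMod p) ^ (2 * k) = 1) (h2 : (2 : ZMod p) ≠ 0) :
    ∃ A B : ℤ, A ^ 2 + B ^ 2 = p ∧ (((2 * k).choose k : ℕ) : ZMod p) ^ 2 = 4 * (A : ZMod p) ^ 2 ∧
      (((-3 : ZMod p) ^ k = 1 ∧ 3 ∣ B) ∨ ((-3 : ZMod p) ^ k = -1 ∧ 3 ∣ A)) := by
  obtain ⟨χ, g, hgen, hχg, hχ4, hI⟩ := exists_quartic hk hk0
  set J := jacobiSum χ (χ ^ 2) with hJ
  set I := (g : ZMod p) ^ k with hIdef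
  have h3 : (3 : ZMod p) ≠ 0 := by
    intro h; rw [h, zero_pow (by omega)] at hs; exact zero_ne_one hs
  -- norm
  have hnorm : J.re ^ 2 + J.im ^ 2 = p := by
    set χc := χ.ringHomComp GaussianInt.toComplex
    have hg2 : χc g ^ 2 = -1 := by
      change (GaussianInt.toComplex (χ g)) ^ 2 = -1
      rw [hχg, ← map_pow, gi_sq]; simp
    obtain ⟨c1, c2, c3⟩ := char_facts two_ne_zero χc g hg2
    have hr : ringChar ℂ ≠ ringChar (ZMod p) := by
      rw [ZMod.ringChar_zmod_n, ringChar.eq_zero]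
      have : p.Prime := Fact.out
      exact this.ne_zero.symm
    have hm := jacobiSum_mul_jacobiSum_inv hr c1 c2 c3
    have hJc : jacobiSum χc (χc ^ 2) = GaussianInt.toComplex J := by
      rw [MulChar.ringHomComp_pow, jacobiSum_ringHomComp]
    have hJc' : jacobiSum χc⁻¹ (χc ^ 2)⁻¹ = star (GaussianInt.toComplex J) := by
      rw [← hJc, jacobiSum, jacobiSum, star_sum]
      apply sum_congr rfl
      intro x _
      rw [star_mul', MulChar.star_apply', MulChar.star_apply']
    rw [hJc, hJc', ZMod.card, RCLike.star_def, Complex.mul_conj, Complex.normSq_apply] at hm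
    simp only [← GaussianInt.intCast_re, ← GaussianInt.intCast_im] at hm
    have : (((J.re ^ 2 + J.im ^ 2 : ℤ) : ℂ)) = ((p : ℤ) : ℂ) := by
      push_cast
      push_cast at hm
      rw [← hm]; ring
    exact_mod_cast this
  -- reduction mod p
  have hII : I * I = ((-1 : ℤ) : ZMod p) := by rw [← sq, hI]; simp
  have hII' : (-I) * (-I) = ((-1 : ℤ) : ZMod p) := by rw [← hII]; ring
  have hv1 : ∀ x : ZMod p, Zsqrtd.lift ⟨I, hII⟩ (χ x) = x ^ k := by
    intro x
    rcases eq_or_ne x 0 with rfl | hx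
    · rw [MulChar.map_zero, map_zero, zero_pow (by omega)]
    · obtain ⟨n, hn⟩ := hgen (Units.mk0 x hx)
      have hx' : x = ((g ^ n : (ZMod p)ˣ) : ZMod p) := by rw [← hn]; rfl
      rw [hx', val_hom χ g hχg]
      simp only [Zsqrtd.lift_apply_apply, gi]
      push_cast
      rw [hIdef, zero_add, one_mul, ← pow_mul, ← pow_mul, mul_comm]
  have hv2 : ∀ x : ZMod p, Zsqrtd.lift ⟨-I, hII'⟩ (χ x) = x ^ (3 * k) := by
    intro x
    rcases eq_or_ne x 0 with rfl | hx
    · rw [MulChar.map_zero, map_zero, zero_pow (by omega)]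
    · obtain ⟨n, hn⟩ := hgen (Units.mk0 x hx)
      have hx' : x = ((g ^ n : (ZMod p)ˣ) : ZMod p) := by rw [← hn]; rfl
      rw [hx', val_hom χ g hχg]
      simp only [Zsqrtd.lift_apply_apply, gi]
      push_cast
      have : -I = I ^ 3 := by linear_combination (-I) * hI
      rw [zero_add, one_mul, this, hIdef, ← pow_mul, ← pow_mul, ← pow_mul]
      congr 1; ring
  have r1 : (J.re : ZMod p) + J.im * I = 0 := by
    have : Zsqrtd.lift ⟨I, hII⟩ J = (J.re : ZMod p) + J.im * I := by simp
    rw [← this, ← sum_beta_zero hk hk0, hJ, jacobiSum, map_sum]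
    apply sum_congr rfl
    intro x _
    rw [map_mul, hv1, MulChar.pow_apply' _ two_ne_zero, map_pow, hv1, ← pow_mul, mul_comm k 2]
  have r2 : (J.re : ZMod p) + J.im * (-I) = - ((-1) ^ k * ((2 * k).choose k : ZMod p)) := by
    have : Zsqrtd.lift ⟨-I, hII'⟩ J = (J.re : ZMod p) + J.im * (-I) := by simp
    rw [← this, ← sum_beta_main hk hk0, hJ, jacobiSum, map_sum]
    apply sum_congr rfl
    intro x _
    rw [map_mul, hv2, MulChar.pow_apply' _ two_ne_zero, map_pow, hv2]
    rcases eq_or_ne (1 - x) 0 with hx | hx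
    · rw [hx, zero_pow (by omega : 3 * k ≠ 0), zero_pow (by omega : 2 * k ≠ 0), zero_pow two_ne_zero]
    · have := ZMod.pow_card_sub_one_eq_one hx
      rw [show p - 1 = 4 * k by omega] at this
      rw [← pow_mul, show 3 * k * 2 = 4 * k + 2 * k by ring, pow_add, this, one_mul]
  -- reduction mod 3
  refine ⟨J.re, J.im, hnorm, ?_, ?_⟩
  · have h1 : 2 * (J.re : ZMod p) = - ((-1) ^ k * ((2 * k).choose k : ZMod p)) := by
      linear_combination r1 + r2
    have h2 : ((-1 : ZMod p) ^ k) ^ 2 = 1 := by rw [← pow_mul, mul_comm, pow_mul]; norm_num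
    have h3 : (2 * (J.re : ZMod p)) ^ 2 = (- ((-1) ^ k * ((2 * k).choose k : ZMod p))) ^ 2 := by rw [h1]
    linear_combination (-h3) - (((2 * k).choose k : ZMod p)) ^ 2 * h2
  · have : Fact (Nat.Prime 3) := ⟨by norm_num⟩
    have hr : ringChar (AlgebraicClosure (ZMod 3)) ≠ ringChar (ZMod p) := by
      rw [ZMod.ringChar_zmod_n, ringChar.eq (AlgebraicClosure (ZMod 3)) 3]
      omega
    obtain ⟨N, ψ, hψ⟩ := AddChar.FiniteField.primitiveChar (ZMod p) (AlgebraicClosure (ZMod 3)) hr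
    set K := CyclotomicField N (AlgebraicClosure (ZMod 3))
    have : CharP K 3 := charP_of_injective_algebraMap
      (algebraMap (AlgebraicClosure (ZMod 3)) K).injective 3
    have h3K : (3 : K) = 0 := by exact_mod_cast CharP.cast_eq_zero K 3
    have h2K : (2 : K) ≠ 0 := by
      intro h; apply one_ne_zero (α := K); linear_combination h3K - h
    obtain ⟨j, hj⟩ : ∃ j : K, j * j = ((-1 : ℤ) : K) := by
      obtain ⟨z, hz⟩ := IsAlgClosed.exists_pow_nat_eq (-1 : AlgebraicClosure (ZMod 3)) two_pos
      refine ⟨algebraMap _ K z, ?_⟩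
      rw [← map_mul, ← sq, hz]; simp
    set f : GaussianInt →+* K := Zsqrtd.lift ⟨j, hj⟩ with hf
    have hfi : f gi = j := by simp [hf, gi]
    have hj2 : j ^ 2 = -1 := by rw [sq, hj]; simp
    have hg2 : (χ.ringHomComp f) g ^ 2 = -1 := by
      change (f (χ g)) ^ 2 = -1
      rw [hχg, hfi, hj2]
    have hfJ := jacobi_mod_three hp3 (χ.ringHomComp f) g hg2
      (by rw [MulChar.ringHomComp_pow, hχ4, MulChar.ringHomComp_one]) ψ hψ
    rw [MulChar.ringHomComp_pow, jacobiSum_ringHomComp, ← hJ] at hfJ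
    have hfJ' : f J = (J.re : K) + J.im * j := by simp [hf]
    have h3' : (-3 : ZMod p) ≠ 0 := neg_ne_zero.mpr h3
    obtain ⟨n, hn⟩ := hgen (Units.mk0 (-3) h3')
    have hn' : (-3 : ZMod p) = ((g ^ n : (ZMod p)ˣ) : ZMod p) := by rw [← hn]; rfl
    have hχ3 : (χ.ringHomComp f) (-3) = j ^ n := by
      change f (χ (-3)) = j ^ n
      rw [hn', val_hom χ g hχg, hfi]
    have h3k : (-3 : ZMod p) ^ k = I ^ n := by
      rw [hn', hIdef]; push_cast; rw [← pow_mul, ← pow_mul, mul_comm]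
    have hne : (1 : ZMod p) ≠ -1 := by
      intro h; apply h2; linear_combination h
    have hpar : n % 2 = 0 := by
      by_contra hodd
      have h1 : ((-3 : ZMod p) ^ k) ^ 2 = 1 := by
        rw [← pow_mul, mul_comm, neg_pow, hs, pow_mul]; norm_num
      rw [h3k, ← pow_mul, mul_comm, pow_mul, hI, Odd.neg_one_pow (Nat.odd_iff.mpr (by omega))] at h1
      exact hne h1.symm
    rw [hχ3, hfJ'] at hfJ
    obtain ⟨r, rfl⟩ : ∃ r, n = 2 * r := ⟨n / 2, by omega⟩
    rw [pow_mul, hI] at h3k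
    rw [pow_mul, hj2] at hfJ
    generalize J.re = A at *
    generalize J.im = B at *
    have hABp : (A ^ 2 + B ^ 2) % 3 = 1 := by rw [hnorm]; omega
    have hmod : (3 ∣ A ∧ B ^ 2 % 3 = 1) ∨ (3 ∣ B ∧ A ^ 2 % 3 = 1) := by
      have ha : A % 3 = 0 ∨ A % 3 = 1 ∨ A % 3 = 2 := by omega
      have hb : B % 3 = 0 ∨ B % 3 = 1 ∨ B % 3 = 2 := by omega
      rcases ha with ha | ha | ha <;> rcases hb with hb | hb | hb <;>
        simp [sq, Int.add_emod, Int.mul_emod, ha, hb] at hABp ⊢ <;> omega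
    have hcast : ∀ z : ℤ, z % 3 = 1 → (z : K) = 1 := by
      intro z hz
      exact cast_one_of_mod_three h3K z hz
    have hcast0 : ∀ z : ℤ, 3 ∣ z → (z : K) = 0 := by
      intro z hz
      exact cast_zero_of_three_dvd h3K z hz
    have hneK : (1 : K) ≠ -1 := by
      intro h; apply h2K; linear_combination h
    rcases hmod with ⟨ha, hb⟩ | ⟨hb, ha⟩
    · have hb' := hcast _ hb
      push_cast at hb'
      rw [hcast0 A ha, zero_add, mul_pow, hb', hj2, one_mul] at hfJ
      rcases neg_one_pow_eq_or (ZMod p) r with hr' | hr'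
      · rcases Nat.even_or_odd r with he | ho
        · rw [he.neg_one_pow] at hfJ; exact absurd hfJ.symm hneK
        · rw [ho.neg_one_pow] at hr'; exact absurd hr'.symm hne
      · right; exact ⟨by rw [h3k, hr'], ha⟩
    · have ha' := hcast _ ha
      push_cast at ha'
      rw [hcast0 B hb, zero_mul, add_zero, ha'] at hfJ
      rcases Nat.even_or_odd r with he | ho
      · left; exact ⟨by rw [h3k, he.neg_one_pow], hb⟩
      · rw [ho.neg_one_pow] at hfJ; exact absurd hfJ hneK

end Quartic2

lemma three_dvd_of_sq_eq {x B : ℤ} (h : x ^ 2 = B ^ 2) (hB : 3 ∣ B) : 3 ∣ x := by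
  have h3 : Prime (3 : ℤ) := Int.prime_three
  apply h3.dvd_of_dvd_pow (n := 2)
  rw [h]
  exact dvd_pow hB two_ne_zero

theorem stmt_13 (p : ℕ) [Fact p.Prime] (hp : p % 12 = 1 ∨ p % 12 = 11) :
    (p % 12 = 1 →
      (∃ x y : ℤ, (p : ℤ) = x ^ 2 + 9 * y ^ 2) ∧
        ∀ x y : ℤ, (p : ℤ) = x ^ 2 + 9 * y ^ 2 →
          (∑ k ∈ Finset.range p,
              (Nat.choose (2 * k) k : ZMod p) * (a k : ZMod p) / (-12 : ZMod p) ^ k)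
            = 4 * (x : ZMod p) ^ 2)
    ∧
    (p % 12 = 11 →
      (∑ k ∈ Finset.range p,
          (Nat.choose (2 * k) k : ZMod p) * (a k : ZMod p) / (-12 : ZMod p) ^ k) = 0) := by
  have hpp : p.Prime := Fact.out
  have hnz : ∀ q : ℕ, q.Prime → q ≤ 3 → ((q : ℕ) : ZMod p) ≠ 0 := by
    intro q hq hq3 h
    rw [ZMod.natCast_eq_zero_iff] at h
    have := (Nat.prime_dvd_prime_iff_eq hpp hq).mp h
    have := hq.two_le
    omega
  have h2 : (2 : ZMod p) ≠ 0 := by exact_mod_cast hnz 2 Nat.prime_two (by norm_num)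
  have h3 : (3 : ZMod p) ≠ 0 := by exact_mod_cast hnz 3 Nat.prime_three (by norm_num)
  obtain ⟨s, hs⟩ := exists_sqrt_three hp
  have hp1 : 1 < p := hpp.one_lt
  refine ⟨fun h1 => ?_, fun h11 => ?_⟩
  · obtain ⟨k, hk⟩ : ∃ k, p = 4 * k + 1 := ⟨(p - 1) / 4, by omega⟩
    have hk0 : 0 < k := by omega
    obtain ⟨i, hi⟩ : IsSquare (-1 : ZMod p) := ZMod.exists_sq_eq_neg_one_iff.mpr (by omega)
    have hs0 : s ≠ 0 := by
      rintro rfl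
      apply h3
      rw [← hs]; ring
    have hs1 : (3 : ZMod p) ^ (2 * k) = 1 := by
      rw [← hs, ← pow_mul, show 2 * (2 * k) = p - 1 by omega]
      exact ZMod.pow_card_sub_one_eq_one hs0
    have hS := S_eq (m := 2 * k) (by omega) (by omega) h2 h3 s hs
    rw [Hp_even_sq hk h2 h3 s hs i (by rw [sq, ← hi])] at hS
    obtain ⟨A, B, hAB, hC, hcase⟩ := quartic_main hk (by omega) hk0 hs1 h2
    rw [hC] at hS
    have hABp : (A : ZMod p) ^ 2 + (B : ZMod p) ^ 2 = 0 := by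
      have := congrArg (Int.cast : ℤ → ZMod p) hAB
      push_cast at this
      rw [this]; exact CharP.cast_eq_zero _ _
    constructor
    · rcases hcase with ⟨-, w, hw⟩ | ⟨-, w, hw⟩
      · exact ⟨A, w, by rw [← hAB, hw]; ring⟩
      · exact ⟨B, w, by rw [← hAB, hw]; ring⟩
    · intro x y hxy
      have hx3 : ¬ (3 : ℤ) ∣ x := by
        rintro ⟨w, rfl⟩
        have : (p : ℤ) = 3 * (3 * w ^ 2 + 3 * y ^ 2) := by rw [hxy]; ring
        omega
      have hq : Prime (p : ℤ) := Nat.prime_iff_prime_int.mp hpp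
      have hu := two_sq_unique (x := x) (z := 3 * y) hq (by omega) (by rw [hxy]; ring) hAB
      rw [hS]
      rcases hcase with ⟨he, hB⟩ | ⟨he, hA⟩
      · have hx : x ^ 2 = A ^ 2 := hu.resolve_right fun h => hx3 (three_dvd_of_sq_eq h hB)
        have hx' : (x : ZMod p) ^ 2 = (A : ZMod p) ^ 2 := by exact_mod_cast congrArg (Int.cast : ℤ → ZMod p) hx
        rw [he, hx', mul_one]
      · have hx : x ^ 2 = B ^ 2 := hu.resolve_left fun h => hx3 (three_dvd_of_sq_eq h hA)
        have hx' : (x : ZMod p) ^ 2 = (B : ZMod p) ^ 2 := by exact_mod_cast congrArg (Int.cast : ℤ → ZMod p) hx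
        rw [he, hx']
        linear_combination (-4) * hABp
  · obtain ⟨m, hm⟩ : ∃ m, p = 2 * m + 1 := ⟨(p - 1) / 2, by omega⟩
    rw [S_eq hm (by omega) h2 h3 s hs, Hp_odd (by omega) s hs, zero_pow two_ne_zero]
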